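/- Let I ⊆ A = K[x_1,…,x_n] be a nonzero proper monomial ideal, let J be its minimal monomial reduction ideal (the ideal generated by the monomials x^a with a ∈ ext(I)), and let ℓ = c(I) + 1 where c(I) = max{dim F : F a compact face of conv(I)} and dim F is the dimension of the affine hull of F. Then for every integer m ≥ ℓ, the integral closure of I^m satisfies \overline{I^m} = J·\overline{I^{m−1}}. -/

import Mathlib

open MvPolynomial Pointwise

attribute [local instance] Classical.propDecidable

noncomputable section

/-- The real exponent vector of a monomial exponent `a : Fin n →₀ ℕ`. -/
def expVec {n : ℕ} (a : Fin n →₀ ℕ) : Fin n → ℝ := fun i => (a i : ℝ)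

/-- The standard inner product on `ℝ^n`. -/
def dotR {n : ℕ} (u v : Fin n → ℝ) : ℝ := ∑ i, u i * v i

/-- A monomial ideal: an ideal generated by a set of monomials. -/
def IsMonomialIdeal {K : Type*} [Field K] {n : ℕ} (I : Ideal (MvPolynomial (Fin n) K)) : Prop :=
  ∃ S : Set (Fin n →₀ ℕ), I = Ideal.span ((fun a => (monomial a (1 : K))) '' S)

/-- The Newton polyhedron of an ideal: the convex hull of the exponent vectors of the
monomials belonging to the ideal. -/
def newtonPolyhedron {K : Type*} [Field K] {n : ℕ} (I : Ideal (MvPolynomial (Fin n) K)) :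
    Set (Fin n → ℝ) :=
  convexHull ℝ {v | ∃ a : Fin n →₀ ℕ, monomial a (1 : K) ∈ I ∧ v = expVec a}

/-- The hyperplane `{v : ⟨u,v⟩ = c}` is a supporting hyperplane of `C`:
`C ⊆ {v : ⟨u,v⟩ ≥ c}` and the hyperplane meets `C`. -/
def IsSupp {n : ℕ} (C : Set (Fin n → ℝ)) (u : Fin n → ℝ) (c : ℝ) : Prop :=
  (∀ v ∈ C, c ≤ dotR u v) ∧ ∃ v ∈ C, dotR u v = c

/-- `F` is a proper face of `C`: `F = S ∩ C` for some supporting hyperplane `S`, `F ≠ C`. -/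
def IsProperFace {n : ℕ} (C F : Set (Fin n → ℝ)) : Prop :=
  ∃ u c, u ≠ 0 ∧ IsSupp C u c ∧ F = {v ∈ C | dotR u v = c} ∧ F ≠ C

/-- A compact face is a proper face that is compact. -/
def IsCompactFace {n : ℕ} (C F : Set (Fin n → ℝ)) : Prop :=
  IsProperFace C F ∧ IsCompact F

/-- A maximal compact face: a compact face maximal under inclusion. -/
def IsMaxCompactFace {n : ℕ} (C F : Set (Fin n → ℝ)) : Prop :=
  IsCompactFace C F ∧ ∀ G, IsCompactFace C G → F ⊆ G → F = G

/-- The graded maximal ideal `(x_1, …, x_n)` of `K[x_1, …, x_n]`. -/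
def maxIdeal (K : Type*) [Field K] (n : ℕ) : Ideal (MvPolynomial (Fin n) K) :=
  Ideal.span (Set.range fun i => (X i : MvPolynomial (Fin n) K))

/-- `f` is a minimal generator of the monomial ideal `L` if `f ∈ L` and `f ∉ (x_1,…,x_n)·L`. -/
def IsMinGen {K : Type*} [Field K] {n : ℕ} (L : Ideal (MvPolynomial (Fin n) K))
    (f : MvPolynomial (Fin n) K) : Prop :=
  f ∈ L ∧ f ∉ maxIdeal K n * L

/-- `L` is a reduction ideal of `I`: `L ⊆ I` and `L·I^{m-1} = I^m` for some `m ≥ 1`. -/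
def IsReduction {K : Type*} [Field K] {n : ℕ} (L I : Ideal (MvPolynomial (Fin n) K)) : Prop :=
  L ≤ I ∧ ∃ m : ℕ, 1 ≤ m ∧ L * I ^ (m - 1) = I ^ m

/-- `c(I)`: the maximum of the dimensions (of affine hulls) of the compact faces of the
Newton polyhedron of `I`. -/
def maxCompactFaceDim {K : Type*} [Field K] {n : ℕ} (I : Ideal (MvPolynomial (Fin n) K)) : ℕ :=
  sSup {d : ℕ | ∃ F, IsCompactFace (newtonPolyhedron I) F ∧
    d = Module.finrank ℝ (affineSpan ℝ F).direction}

/-- The integral closure of a monomial ideal: the ideal generated by the monomials whose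
exponent vectors lie in the Newton polyhedron. -/
def intCl {K : Type*} [Field K] {n : ℕ} (L : Ideal (MvPolynomial (Fin n) K)) :
    Ideal (MvPolynomial (Fin n) K) :=
  Ideal.span {f | ∃ b : Fin n →₀ ℕ, expVec b ∈ newtonPolyhedron L ∧ f = monomial b (1 : K)}


/-! ### Closedness of finitely generated cones -/

lemma fgCone_closed {ι : Type*} {n : ℕ} (g : ι → (Fin n → ℝ)) (s : Finset ι) :
    IsClosed {x : Fin n → ℝ | ∃ t : ι → ℝ, (∀ i ∈ s, 0 ≤ t i) ∧ x = ∑ i ∈ s, t i • g i} := by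
  induction s using Finset.strongInduction with
  | H s ih =>
  by_cases hli : LinearIndependent ℝ (fun i : s => g i)
  · have hinj : Function.Injective (Fintype.linearCombination ℝ (fun i : s => g i)) :=
      linearIndependent_iff_injective_fintypeLinearCombination.1 hli
    have hce := LinearMap.isClosedEmbedding_of_injective
      (f := Fintype.linearCombination ℝ (fun i : s => g i)) (LinearMap.ker_eq_bot.2 hinj)
    have hc : IsClosed (Set.Ici (0 : s → ℝ)) := isClosed_Ici
    have := hce.isClosedMap _ hc
    convert this using 1
    ext x
    constructor
    · rintro ⟨t, ht, rfl⟩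
      refine ⟨fun i => t i, fun i => ht i i.2, ?_⟩
      rw [Fintype.linearCombination_apply]
      exact Finset.sum_coe_sort s (fun i => t i • g i)
    · rintro ⟨t, ht, rfl⟩
      refine ⟨fun i => if h : i ∈ s then t ⟨i, h⟩ else 0, ?_, ?_⟩
      · intro i hi
        simpa [hi] using ht ⟨i, hi⟩
      · rw [Fintype.linearCombination_apply, ← Finset.sum_coe_sort s]
        refine Finset.sum_congr rfl fun i _ => ?_
        simp
  · have hdep : ∃ f : ι → ℝ, ∑ i ∈ s, f i • g i = 0 ∧ ∃ i ∈ s, 0 < f i := by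
      rw [Fintype.not_linearIndependent_iff] at hli
      obtain ⟨f, hf, i, hi⟩ := hli
      have key : ∀ f : s → ℝ, ∑ i, f i • g i = 0 → 0 < f i →
          ∃ f : ι → ℝ, ∑ i ∈ s, f i • g i = 0 ∧ ∃ i ∈ s, 0 < f i := by
        intro f hf hi
        refine ⟨fun i => if h : i ∈ s then f ⟨i, h⟩ else 0, ?_, i, i.2, ?_⟩
        · rw [← hf, ← Finset.sum_coe_sort s]
          refine Finset.sum_congr rfl fun i _ => ?_
          simp
        · simpa using hi
      rcases lt_or_gt_of_ne hi with h | h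
      · refine key (fun i => - f i) ?_ (by simpa using h)
        simp only [neg_smul, Finset.sum_neg_distrib, hf, neg_zero]
      · exact key f hf h
    obtain ⟨f, hf, i0, hi0, hpos⟩ := hdep
    have : {x : Fin n → ℝ | ∃ t : ι → ℝ, (∀ i ∈ s, 0 ≤ t i) ∧ x = ∑ i ∈ s, t i • g i} =
        ⋃ j ∈ s, {x : Fin n → ℝ | ∃ t : ι → ℝ, (∀ i ∈ s.erase j, 0 ≤ t i) ∧
          x = ∑ i ∈ s.erase j, t i • g i} := by
      ext x
      simp only [Set.mem_iUnion]
      constructor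
      · rintro ⟨t, ht, rfl⟩
        obtain ⟨j, hj, hmin⟩ := Finset.exists_min_image (s.filter fun i => 0 < f i)
          (fun i => t i / f i) ⟨i0, by simp [hi0, hpos]⟩
        simp only [Finset.mem_filter] at hj hmin
        refine ⟨j, hj.1, fun i => t i - t j / f j * f i, ?_, ?_⟩
        · intro i hi
          have his := Finset.mem_of_mem_erase hi
          by_cases hfi : 0 < f i
          · have := hmin i ⟨his, hfi⟩
            rw [le_div_iff₀ hfi] at this
            linarith
          · have h1 : 0 ≤ t j / f j := div_nonneg (ht j hj.1) hj.2.le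
            have := ht i his
            nlinarith
        · have h0 : (t j - t j / f j * f j) • g j = 0 := by
            rw [div_mul_cancel₀ _ hj.2.ne', sub_self, zero_smul]
          rw [Finset.sum_erase s h0]
          simp only [sub_smul, mul_smul, Finset.sum_sub_distrib, ← Finset.smul_sum]
          rw [hf]; simp
      · rintro ⟨j, hj, t, ht, rfl⟩
        refine ⟨fun i => if i = j then 0 else t i, ?_, ?_⟩
        · intro i hi
          by_cases h : i = j
          · simp [h]
          · simpa [h] using ht i (Finset.mem_erase.2 ⟨h, hi⟩)
        · rw [← Finset.sum_erase s (a := j) (by simp)]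
          refine Finset.sum_congr rfl fun i hi => ?_
          simp [Finset.ne_of_mem_erase hi]
    rw [this]
    exact s.finite_toSet.isClosed_biUnion fun j hj => ih _ (Finset.erase_ssubset hj)

lemma dotR_add {n : ℕ} (u v w : Fin n → ℝ) : dotR u (v + w) = dotR u v + dotR u w := by
  simp [dotR, mul_add, Finset.sum_add_distrib]

lemma dotR_smul {n : ℕ} (u : Fin n → ℝ) (c : ℝ) (w : Fin n → ℝ) :
    dotR u (c • w) = c * dotR u w := by
  simp [dotR, Finset.mul_sum, mul_left_comm]

lemma continuous_dotR {n : ℕ} (u : Fin n → ℝ) : Continuous (dotR u) := by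
  unfold dotR; fun_prop

lemma convex_dotR_ge {n : ℕ} (u : Fin n → ℝ) (c : ℝ) : Convex ℝ {v | c ≤ dotR u v} := by
  intro x hx y hy a b ha hb hab
  simp only [Set.mem_ofPred_eq] at *
  rw [dotR_add, dotR_smul, dotR_smul]
  have : c = a * c + b * c := by rw [← add_mul, hab, one_mul]
  rw [this]; gcongr

/-- Every point of a polyhedron `conv V + orthant` dominates a point of a face with strictly
positive normal vector. -/
lemma exists_pos_face {n : ℕ} (V : Finset (Fin n → ℝ)) (hV : ∀ v ∈ V, 0 ≤ v)
    (C : Set (Fin n → ℝ)) (hC : C = convexHull ℝ (V : Set (Fin n → ℝ)) + Set.Ici 0)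
    (q : Fin n → ℝ) (hq : q ∈ C) :
    IsClosed C ∧ (∀ x ∈ C, 0 ≤ x) ∧ ∃ p ∈ C, p ≤ q ∧ ∃ u : Fin n → ℝ, (∀ i, 0 < u i) ∧
      ∀ x ∈ C, dotR u p ≤ dotR u x := by
  have hcl : IsClosed C := by
    rw [hC]
    exact isClosed_Ici.add_left_of_isCompact (V.finite_toSet.isCompact_convexHull (𝕜 := ℝ))
  have hhull : ∀ x ∈ convexHull ℝ (V : Set (Fin n → ℝ)), 0 ≤ x := by
    intro x hx
    exact convexHull_min (t := Set.Ici 0) (fun v hv => hV v hv) (convex_Ici 0) hx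
  have hnn : ∀ x ∈ C, 0 ≤ x := by
    rw [hC]
    rintro _ ⟨x, hx, y, hy, rfl⟩
    exact add_nonneg (hhull x hx) hy
  have hsub : convexHull ℝ (V : Set (Fin n → ℝ)) ⊆ C := by
    rw [hC]
    intro x hx
    exact ⟨x, hx, 0, Set.mem_Ici.2 (le_refl _), add_zero x⟩
  refine ⟨hcl, hnn, ?_⟩
  have hcomp : IsCompact (C ∩ Set.Icc 0 q) := isCompact_Icc.inter_left hcl
  obtain ⟨p, ⟨hpC, hp0, hpq⟩, hpmin⟩ := hcomp.exists_isMinOn ⟨q, hq, hnn q hq, le_refl q⟩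
    (f := fun x => ∑ i, x i) (by fun_prop)
  have hmin : ∀ x ∈ C, x ≤ p → x = p := by
    intro x hx hxp
    have h1 : ∑ i, p i ≤ ∑ i, x i := hpmin ⟨hx, hnn x hx, hxp.trans hpq⟩
    have h2 := (Finset.sum_eq_sum_iff_of_le (s := Finset.univ) (f := x) (g := p)
      (fun i _ => hxp i)).1 (le_antisymm (Finset.sum_le_sum fun i _ => hxp i) h1)
    ext i; exact h2 i (Finset.mem_univ i)
  refine ⟨p, hpC, hpq, ?_⟩
  set D : Set (Fin n → ℝ) := {x | ∃ t : (Fin n → ℝ) → ℝ, (∀ v ∈ V, 0 ≤ t v) ∧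
    x = ∑ v ∈ V, t v • (v - p)} with hD
  have hDcl : IsClosed D := fgCone_closed (fun v => v - p) V
  have hDconv : Convex ℝ D := by
    rintro _ ⟨t, ht, rfl⟩ _ ⟨r, hr, rfl⟩ a b ha hb hab
    refine ⟨fun v => a * t v + b * r v, fun v hv => ?_, ?_⟩
    · have := ht v hv
      have := hr v hv
      positivity
    · simp only [add_smul, mul_smul, Finset.sum_add_distrib, Finset.smul_sum]
  have hdisj : Disjoint (convexHull ℝ (Set.range fun i : Fin n => -(Pi.single i (1 : ℝ) : Fin n → ℝ))) D := by
    rw [Set.disjoint_left]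
    rintro y hy ⟨t, ht, hyt⟩
    have hy' : y ≤ 0 ∧ ∑ i, y i = -1 := by
      have hconv : Convex ℝ {y : Fin n → ℝ | y ≤ 0 ∧ ∑ i, y i = -1} := by
        rintro x ⟨hx, hx'⟩ z ⟨hz, hz'⟩ a b ha hb hab
        refine ⟨?_, ?_⟩
        · intro i
          have h1 := hx i
          have h2 := hz i
          simp only [Pi.add_apply, Pi.smul_apply, smul_eq_mul, Pi.zero_apply] at *
          nlinarith
        · simp only [Pi.add_apply, Pi.smul_apply, smul_eq_mul, Finset.sum_add_distrib,
            ← Finset.mul_sum, hx', hz']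
          linarith
      refine convexHull_min ?_ hconv hy
      rintro _ ⟨i, rfl⟩
      refine ⟨?_, ?_⟩
      · simp
      · simp
    have hT0 : 0 ≤ ∑ v ∈ V, t v := Finset.sum_nonneg ht
    have hT : 0 < ∑ v ∈ V, t v := by
      rcases hT0.lt_or_eq with h | h
      · exact h
      · exfalso
        have h0 := (Finset.sum_eq_zero_iff_of_nonneg ht).1 h.symm
        have : y = 0 := by
          rw [hyt]
          exact Finset.sum_eq_zero fun v hv => by rw [h0 v hv, zero_smul]
        have h3 := hy'.2
        rw [this] at h3
        simp at h3
    set T := ∑ v ∈ V, t v with hTdef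
    have hx : p + T⁻¹ • y = ∑ v ∈ V, (T⁻¹ * t v) • v := by
      rw [hyt]
      simp only [smul_sub, Finset.sum_sub_distrib, ← Finset.sum_smul, ← hTdef, smul_smul,
        inv_mul_cancel₀ hT.ne', one_smul, Finset.smul_sum]
      abel
    have hxC : p + T⁻¹ • y ∈ C := by
      apply hsub
      rw [hx]
      refine (convex_convexHull ℝ _).sum_mem (fun v hv => ?_) ?_
        (fun v hv => subset_convexHull ℝ _ hv)
      · exact mul_nonneg (inv_nonneg.2 hT0) (ht v hv)
      · rw [← Finset.mul_sum, ← hTdef, inv_mul_cancel₀ hT.ne']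
    have hle : p + T⁻¹ • y ≤ p := by
      have : T⁻¹ • y ≤ 0 := smul_nonpos_of_nonneg_of_nonpos (inv_nonneg.2 hT0) hy'.1
      simpa using this
    have heq := hmin _ hxC hle
    have hy0 : y = 0 := by
      have h5 : T⁻¹ • y = 0 := by simpa using heq
      rcases smul_eq_zero.1 h5 with h | h
      · exact absurd h (inv_ne_zero hT.ne')
      · exact h
    have h3 := hy'.2
    rw [hy0] at h3
    simp at h3
  obtain ⟨f, a, b, hfa, hab, hfb⟩ := geometric_hahn_banach_compact_closed
    (convex_convexHull ℝ _) ((Set.finite_range _).isCompact_convexHull (𝕜 := ℝ)) hDconv hDcl hdisj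
  have hb0 : b < 0 := by
    have := hfb 0 ⟨fun _ => 0, fun _ _ => le_refl _, by simp⟩
    simpa using this
  have hDnn : ∀ v ∈ V, 0 ≤ f (v - p) := by
    intro v hv
    by_contra hneg
    push Not at hneg
    have h1 := hfb ((b / f (v - p)) • (v - p)) ⟨fun w => if w = v then b / f (v - p) else 0, ?_, ?_⟩
    · rw [map_smul, smul_eq_mul, div_mul_cancel₀ _ hneg.ne] at h1
      exact lt_irrefl _ h1
    · intro w _
      dsimp only
      split_ifs
      · exact (div_pos_of_neg_of_neg hb0 hneg).le
      · exact le_refl _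
    · simp [hv]
  have hfdot : ∀ x, f x = dotR (fun i => f (Pi.single i 1)) x := by
    intro x
    conv_lhs => rw [pi_eq_sum_univ' x]
    simp only [map_sum, map_smul, dotR, smul_eq_mul]
    refine Finset.sum_congr rfl fun i _ => ?_
    rw [mul_comm]
  have hupos : ∀ i, 0 < f (Pi.single i 1) := by
    intro i
    have := hfa _ (subset_convexHull ℝ _ ⟨i, rfl⟩)
    rw [map_neg] at this
    linarith
  refine ⟨fun i => f (Pi.single i 1), hupos, ?_⟩
  rw [hC]
  rintro _ ⟨x, hx, y, hy, rfl⟩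
  have h1 : dotR (fun i => f (Pi.single i 1)) p ≤ dotR (fun i => f (Pi.single i 1)) x := by
    refine convexHull_min (t := {x | dotR (fun i => f (Pi.single i 1)) p ≤ dotR (fun i => f (Pi.single i 1)) x}) ?_ (convex_dotR_ge _ _) hx
    intro v hv
    have := hDnn v hv
    rw [map_sub] at this
    simp only [Set.mem_ofPred_eq, ← hfdot]
    linarith
  have h2 : 0 ≤ dotR (fun i => f (Pi.single i 1)) y :=
    Finset.sum_nonneg fun i _ => mul_nonneg (hupos i).le (hy i)
  change _ ≤ dotR _ (x + y)
  rw [dotR_add]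
  linarith

/-! ### Newton polyhedra of products -/

lemma expVec_add {n : ℕ} (a b : Fin n →₀ ℕ) : expVec (a + b) = expVec a + expVec b := by
  ext i; simp [expVec]

lemma expVec_nonneg {n : ℕ} (a : Fin n →₀ ℕ) : 0 ≤ expVec a := fun i => by simp [expVec]

lemma mem_span_mon {K : Type*} [Field K] {n : ℕ} (S : Set (Fin n →₀ ℕ)) (a : Fin n →₀ ℕ) :
    monomial a (1 : K) ∈ Ideal.span ((fun a => (monomial a (1 : K))) '' S) ↔ ∃ s ∈ S, s ≤ a := by
  rw [mem_ideal_span_monomial_image, support_monomial]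
  simp

lemma IsMonomialIdeal.mul' {K : Type*} [Field K] {n : ℕ} {I L : Ideal (MvPolynomial (Fin n) K)}
    (hI : IsMonomialIdeal I) (hL : IsMonomialIdeal L) : IsMonomialIdeal (I * L) ∧
    ∀ a, monomial a (1 : K) ∈ I * L ↔
      ∃ b c, monomial b (1 : K) ∈ I ∧ monomial c (1 : K) ∈ L ∧ a = b + c := by
  obtain ⟨S, rfl⟩ := hI
  obtain ⟨T, rfl⟩ := hL
  have h : Ideal.span ((fun a => (monomial a (1 : K))) '' S) *
      Ideal.span ((fun a => (monomial a (1 : K))) '' T) =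
      Ideal.span ((fun a => (monomial a (1 : K))) '' (S + T)) := by
    rw [Ideal.span_mul_span']
    congr 1
    ext x
    simp only [Set.mem_mul, Set.mem_image, Set.mem_add]
    constructor
    · rintro ⟨_, ⟨s, hs, rfl⟩, _, ⟨t, ht, rfl⟩, rfl⟩
      exact ⟨s + t, ⟨s, hs, t, ht, rfl⟩, by simp [monomial_mul]⟩
    · rintro ⟨_, ⟨s, hs, t, ht, rfl⟩, rfl⟩
      exact ⟨_, ⟨s, hs, rfl⟩, _, ⟨t, ht, rfl⟩, by simp [monomial_mul]⟩
  refine ⟨⟨S + T, h⟩, fun a => ?_⟩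
  rw [h]
  simp only [mem_span_mon]
  constructor
  · rintro ⟨_, ⟨s, hs, t, ht, rfl⟩, hle⟩
    obtain ⟨d, rfl⟩ := le_iff_exists_add.1 hle
    exact ⟨s, t + d, ⟨s, hs, le_refl _⟩, ⟨t, ht, by simp⟩, add_assoc _ _ _⟩
  · rintro ⟨b, c, ⟨s, hs, hsb⟩, ⟨t, ht, htc⟩, rfl⟩
    exact ⟨s + t, ⟨s, hs, t, ht, rfl⟩, add_le_add hsb htc⟩

lemma np_mul {K : Type*} [Field K] {n : ℕ} {I L : Ideal (MvPolynomial (Fin n) K)}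
    (hI : IsMonomialIdeal I) (hL : IsMonomialIdeal L) :
    newtonPolyhedron (I * L) = newtonPolyhedron I + newtonPolyhedron L := by
  unfold newtonPolyhedron
  rw [← convexHull_add]
  congr 1
  ext v
  simp only [Set.mem_add, Set.mem_ofPred_eq, (hI.mul' hL).2]
  constructor
  · rintro ⟨_, ⟨b, c, hb, hc, rfl⟩, rfl⟩
    exact ⟨_, ⟨b, hb, rfl⟩, _, ⟨c, hc, rfl⟩, (expVec_add b c).symm⟩
  · rintro ⟨_, ⟨b, hb, rfl⟩, _, ⟨c, hc, rfl⟩, rfl⟩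
    exact ⟨_, ⟨b, c, hb, hc, rfl⟩, (expVec_add b c).symm⟩

lemma hull_expVec (n : ℕ) :
    convexHull ℝ (Set.range (expVec : (Fin n →₀ ℕ) → Fin n → ℝ)) = Set.Ici 0 := by
  have h : Set.range (expVec : (Fin n →₀ ℕ) → Fin n → ℝ) =
      Set.univ.pi (fun _ : Fin n => Set.range (Nat.cast : ℕ → ℝ)) := by
    ext v
    simp only [Set.mem_range, Set.mem_univ_pi]
    constructor
    · rintro ⟨a, rfl⟩ i
      exact ⟨a i, rfl⟩
    · intro hv
      choose a ha using hv
      exact ⟨Finsupp.equivFunOnFinite.symm a, by ext i; simp [expVec, ha]⟩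
  have h1 : convexHull ℝ (Set.range (Nat.cast : ℕ → ℝ)) = Set.Ici 0 := by
    apply Set.Subset.antisymm
    · refine convexHull_min ?_ (convex_Ici 0)
      rintro _ ⟨k, rfl⟩
      exact Nat.cast_nonneg (α := ℝ) k
    · intro x hx
      have hmem : ∀ k : ℕ, (k : ℝ) ∈ convexHull ℝ (Set.range (Nat.cast : ℕ → ℝ)) :=
        fun k => subset_convexHull ℝ _ ⟨k, rfl⟩
      obtain ⟨k, hk⟩ := exists_nat_ge x
      have hoc := (convex_convexHull ℝ (Set.range (Nat.cast : ℕ → ℝ))).ordConnected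
      exact hoc.out (hmem 0) (hmem k) ⟨by simpa using hx, hk⟩
  rw [h, convexHull_pi]
  ext v
  simp only [h1, Set.mem_univ_pi, Set.mem_Ici]
  rfl

lemma np_one {K : Type*} [Field K] {n : ℕ} :
    newtonPolyhedron (1 : Ideal (MvPolynomial (Fin n) K)) = Set.Ici 0 := by
  rw [← hull_expVec]
  unfold newtonPolyhedron
  congr 1
  ext v
  simp [eq_comm]

lemma isMonomial_one {K : Type*} [Field K] {n : ℕ} :
    IsMonomialIdeal (1 : Ideal (MvPolynomial (Fin n) K)) :=
  ⟨{0}, by simp [Ideal.one_eq_top]⟩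

lemma isMonomial_pow {K : Type*} [Field K] {n : ℕ} {I : Ideal (MvPolynomial (Fin n) K)}
    (hI : IsMonomialIdeal I) (k : ℕ) : IsMonomialIdeal (I ^ k) := by
  induction k with
  | zero => rw [pow_zero]; exact isMonomial_one
  | succ k ih => rw [pow_succ]; exact (ih.mul' hI).1

lemma np_add_orth {K : Type*} [Field K] {n : ℕ} {I : Ideal (MvPolynomial (Fin n) K)}
    (hI : IsMonomialIdeal I) : newtonPolyhedron I + Set.Ici 0 = newtonPolyhedron I := by
  rw [← np_one (K := K), ← np_mul hI isMonomial_one, mul_one]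

lemma np_pow {K : Type*} [Field K] {n : ℕ} {I : Ideal (MvPolynomial (Fin n) K)}
    (hI : IsMonomialIdeal I) (hne : (newtonPolyhedron I).Nonempty) (k : ℕ) :
    newtonPolyhedron (I ^ k) = (k : ℝ) • newtonPolyhedron I + Set.Ici 0 := by
  induction k with
  | zero =>
    rw [pow_zero, np_one, Nat.cast_zero, Set.zero_smul_set hne, zero_add]
  | succ k ih =>
    have hc : Convex ℝ (newtonPolyhedron I) := convex_convexHull ℝ _
    rw [pow_succ, np_mul (isMonomial_pow hI k) hI, ih, Nat.cast_succ,
      hc.add_smul (Nat.cast_nonneg k) zero_le_one, one_smul, add_right_comm]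

/-- Dickson's lemma: the Newton polyhedron is a polytope plus the orthant. -/
lemma np_eq {K : Type*} [Field K] {n : ℕ} {I : Ideal (MvPolynomial (Fin n) K)} :
    ∃ V : Finset (Fin n → ℝ), (∀ v ∈ V, 0 ≤ v) ∧
      newtonPolyhedron I = convexHull ℝ (V : Set (Fin n → ℝ)) + Set.Ici 0 := by
  set G : Set (Fin n →₀ ℕ) := {a | monomial a (1 : K) ∈ I} with hG
  have hfin : {a | Minimal (· ∈ G) a}.Finite :=
    WellQuasiOrderedLE.finite_of_isAntichain (setOfPred_minimal_antichain _)
  refine ⟨(hfin.image expVec).toFinset, ?_, ?_⟩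
  · intro v hv
    simp only [Set.Finite.mem_toFinset, Set.mem_image] at hv
    obtain ⟨a, _, rfl⟩ := hv
    exact expVec_nonneg a
  · rw [← hull_expVec, ← convexHull_add]
    unfold newtonPolyhedron
    congr 1
    ext v
    simp only [Set.mem_ofPred_eq, Set.Finite.coe_toFinset, Set.mem_add, Set.mem_image,
      Set.mem_range]
    constructor
    · rintro ⟨a, ha, rfl⟩
      obtain ⟨b, hb, hbm⟩ := exists_minimal_le_of_wellFoundedLT (· ∈ G) a ha
      obtain ⟨d, rfl⟩ := le_iff_exists_add.1 hb
      exact ⟨_, ⟨b, hbm, rfl⟩, _, ⟨d, rfl⟩, (expVec_add b d).symm⟩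
    · rintro ⟨_, ⟨b, hb, rfl⟩, _, ⟨d, rfl⟩, rfl⟩
      refine ⟨b + d, ?_, (expVec_add b d).symm⟩
      have : monomial (b + d) (1 : K) = monomial d 1 * monomial b 1 := by
        rw [monomial_mul, add_comm, mul_one]
      rw [this]
      exact I.mul_mem_left _ hb.prop

/-- The key combinatorial step. -/
lemma key_step {K : Type*} [Field K] {n : ℕ} [NeZero n] {I : Ideal (MvPolynomial (Fin n) K)}
    (hI : IsMonomialIdeal I) (q : Fin n → ℝ) (hq : q ∈ newtonPolyhedron I)
    (m : ℕ) (hm : maxCompactFaceDim I + 1 ≤ m) :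
    ∃ a : Fin n →₀ ℕ, expVec a ∈ Set.extremePoints ℝ (newtonPolyhedron I) ∧
      (m : ℝ) • q - expVec a ∈ ((m - 1 : ℕ) : ℝ) • newtonPolyhedron I + Set.Ici 0 := by
  obtain ⟨V, hV, hVC⟩ := np_eq (I := I)
  have hCconv : Convex ℝ (newtonPolyhedron I) := convex_convexHull ℝ _
  obtain ⟨hcl, hnn, p, hpC, hpq, u, hu, hup⟩ := exists_pos_face V hV _ hVC q hq
  have horth : newtonPolyhedron I + Set.Ici 0 = newtonPolyhedron I := np_add_orth hI
  set C := newtonPolyhedron I with hCdef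
  set F : Set (Fin n → ℝ) := {v ∈ C | dotR u v = dotR u p} with hF
  have hpF : p ∈ F := ⟨hpC, rfl⟩
  have hFsub : ∀ v ∈ F, v ∈ Set.Icc (0 : Fin n → ℝ) (fun i => dotR u p / u i) := by
    rintro v ⟨hv, hvp⟩
    refine ⟨hnn v hv, fun i => ?_⟩
    rw [le_div_iff₀ (hu i), ← hvp, mul_comm]
    exact Finset.single_le_sum (f := fun i => u i * v i)
      (fun j _ => mul_nonneg (hu j).le (hnn v hv j)) (Finset.mem_univ i)
  have hFcl : IsClosed F := hcl.inter (isClosed_eq (continuous_dotR u) continuous_const)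
  have hFcomp : IsCompact F := isCompact_Icc.of_isClosed_subset hFcl hFsub
  have hFface : IsCompactFace C F := by
    refine ⟨⟨u, dotR u p, ?_, ⟨hup, p, hpC, rfl⟩, rfl, ?_⟩, hFcomp⟩
    · intro h
      have := hu 0
      rw [h] at this
      simp at this
    · intro h
      have h1 : p + Pi.single 0 1 ∈ C := by
        rw [← horth]
        refine ⟨p, hpC, Pi.single 0 1, ?_, rfl⟩
        simp
      rw [← h] at h1
      have h2 := h1.2
      rw [dotR_add] at h2
      have h3 : dotR u (Pi.single 0 1) = u 0 := by simp [dotR, Pi.single_apply]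
      have := hu 0
      linarith
  have hext : IsExtreme ℝ C F := by
    refine ⟨fun x hx => hx.1, ?_⟩
    rintro x hx y hy z hz hxy
    obtain ⟨a, b, ha, hb, hab, rfl⟩ := hxy
    have hz2 := hz.2
    rw [dotR_add, dotR_smul, dotR_smul] at hz2
    have h1 := hup x hx
    have h2 := hup y hy
    refine ⟨hx, le_antisymm ?_ h1⟩
    have hb' : b = 1 - a := by linarith
    subst hb'
    nlinarith
  have hFconv : Convex ℝ F := by
    rintro x ⟨hx, hx'⟩ y ⟨hy, hy'⟩ a b ha hb hab
    refine ⟨hCconv hx hy ha hb hab, ?_⟩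
    rw [dotR_add, dotR_smul, dotR_smul, hx', hy', ← add_mul, hab, one_mul]
  have hextsub : F.extremePoints ℝ ⊆ C.extremePoints ℝ := hext.extremePoints_subset_extremePoints
  have hint : ∀ v ∈ C.extremePoints ℝ, ∃ a : Fin n →₀ ℕ, v = expVec a := by
    intro v hv
    obtain ⟨a, _, ha⟩ := extremePoints_convexHull_subset hv
    exact ⟨a, ha⟩
  have hfin : (F.extremePoints ℝ).Finite := by
    obtain ⟨N, hN⟩ : ∃ N : Fin n → ℕ, ∀ i, dotR u p / u i ≤ N i := by
      choose N hN using fun i => exists_nat_ge (dotR u p / u i)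
      exact ⟨N, hN⟩
    refine ((Set.finite_Iic (Finsupp.equivFunOnFinite.symm N)).image expVec).subset ?_
    intro v hv
    obtain ⟨a, rfl⟩ := hint v (hextsub hv)
    refine ⟨a, fun i => ?_, rfl⟩
    have h1 := ((hFsub _ hv.1).2 i).trans (hN i)
    simpa [expVec] using h1
  have hpmem : p ∈ convexHull ℝ (F.extremePoints ℝ) := by
    have h1 := closure_convexHull_extremePoints hFcomp hFconv
    rw [(hfin.isClosed_convexHull (𝕜 := ℝ)).closure_eq] at h1
    rw [h1]; exact hpF
  obtain ⟨ι, _, z, w, hz, hzind, hwpos, hwsum, hwz⟩ := eq_pos_convex_span_of_mem_convexHull hpmem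
  have hcard : Fintype.card ι ≤ m := by
    refine le_trans ?_ hm
    refine hzind.card_le_finrank_succ.trans ?_
    gcongr
    have h1 : Module.finrank ℝ (vectorSpan ℝ (Set.range z)) ≤
        Module.finrank ℝ (affineSpan ℝ F).direction := by
      rw [direction_affineSpan]
      exact Submodule.finrank_mono
        (vectorSpan_mono ℝ (hz.trans extremePoints_subset))
    refine h1.trans ?_
    refine le_csSup ⟨n, ?_⟩ ⟨F, hFface, rfl⟩
    rintro d ⟨G, _, rfl⟩
    have := Submodule.finrank_le (affineSpan ℝ G).direction
    simpa using this
  have hmpos : (0 : ℝ) < m := by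
    have : 0 < m := by omega
    exact_mod_cast this
  obtain ⟨j, hj⟩ : ∃ j, 1 ≤ (m : ℝ) * w j := by
    by_contra hcon
    push Not at hcon
    have hnonempty : Nonempty ι := by
      by_contra hemp
      rw [not_nonempty_iff] at hemp
      simp at hwsum
    have h1 : ∑ i, (m : ℝ) * w i < ∑ i : ι, (1 : ℝ) :=
      Finset.sum_lt_sum_of_nonempty Finset.univ_nonempty fun i _ => hcon i
    rw [← Finset.mul_sum, hwsum, mul_one] at h1
    simp at h1
    omega
  have hzC : ∀ i, z i ∈ C := fun i => (hz ⟨i, rfl⟩).1.1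
  obtain ⟨a, ha⟩ := hint (z j) (hextsub (hz ⟨j, rfl⟩))
  refine ⟨a, ha ▸ hextsub (hz ⟨j, rfl⟩), ?_⟩
  rw [← ha]
  have hm1 : ((m - 1 : ℕ) : ℝ) = m - 1 := by
    rw [Nat.cast_sub (by omega)]; simp
  refine ⟨(m : ℝ) • p - z j, ?_, (m : ℝ) • (q - p), ?_, ?_⟩
  · set μ : ι → ℝ := fun i => m * w i - if i = j then 1 else 0 with hμ
    have hμ0 : ∀ i, 0 ≤ μ i := by
      intro i
      by_cases h : i = j
      · subst h; simp [hμ]; linarith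
      · simp [hμ, h]; exact mul_nonneg hmpos.le (hwpos i).le
    have hμsum : ∑ i, μ i = ((m - 1 : ℕ) : ℝ) := by
      simp [hμ, Finset.sum_sub_distrib, ← Finset.mul_sum, hwsum, hm1]
    have hμz : (m : ℝ) • p - z j = ∑ i, μ i • z i := by
      simp only [hμ, sub_smul, Finset.sum_sub_distrib, mul_smul, ← Finset.smul_sum, hwz]
      simp
    rw [hμz]
    rcases Nat.eq_zero_or_pos (m - 1) with h0 | hpos
    · rw [h0] at hμsum ⊢
      simp only [Nat.cast_zero] at hμsum ⊢
      have := (Finset.sum_eq_zero_iff_of_nonneg (fun i _ => hμ0 i)).1 hμsum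
      refine ⟨p, hpC, ?_⟩
      rw [Finset.sum_eq_zero fun i hi => by rw [this i hi, zero_smul]]
      simp
    · have hpos' : (0 : ℝ) < ((m - 1 : ℕ) : ℝ) := by exact_mod_cast hpos
      refine ⟨Finset.univ.centerMass μ z, ?_, ?_⟩
      · exact hCconv.centerMass_mem (fun i _ => hμ0 i) (by rw [hμsum]; exact hpos')
          (fun i _ => hzC i)
      · simp only [Finset.centerMass, hμsum]
        rw [smul_smul, mul_inv_cancel₀ hpos'.ne', one_smul]
  · exact smul_nonneg hmpos.le (sub_nonneg.2 hpq)
  · simp only [smul_sub]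
    abel

theorem stmt18 {K : Type*} [Field K] {n : ℕ} (I J : Ideal (MvPolynomial (Fin n) K))
    (hI : IsMonomialIdeal I) (hne : I ≠ ⊥) (hproper : I ≠ ⊤)
    (hJ : J = Ideal.span {f | ∃ a : Fin n →₀ ℕ,
        expVec a ∈ Set.extremePoints ℝ (newtonPolyhedron I) ∧ f = monomial a (1 : K)})
    (ℓ : ℕ) (hℓ : ℓ = maxCompactFaceDim I + 1)
    (m : ℕ) (hm : ℓ ≤ m) :
    intCl (I ^ m) = J * intCl (I ^ (m - 1)) := by
  obtain ⟨k, rfl⟩ : ∃ k, m = k + 1 := ⟨m - 1, by omega⟩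
  have hn : n ≠ 0 := by
    rintro rfl
    obtain ⟨S, rfl⟩ := hI
    have hS : S.Nonempty := by
      by_contra h
      rw [Set.not_nonempty_iff_eq_empty] at h
      simp [h] at hne
    obtain ⟨s, hs⟩ := hS
    apply hproper
    rw [Ideal.eq_top_iff_one]
    apply Ideal.subset_span
    refine ⟨s, hs, ?_⟩
    rw [Subsingleton.elim s 0]
    simp
  have : NeZero n := ⟨hn⟩
  have hnonempty : (newtonPolyhedron I).Nonempty := by
    obtain ⟨S, rfl⟩ := hI
    have hS : S.Nonempty := by
      by_contra h
      rw [Set.not_nonempty_iff_eq_empty] at h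
      simp [h] at hne
    obtain ⟨s, hs⟩ := hS
    exact ⟨expVec s, subset_convexHull ℝ _ ⟨s, Ideal.subset_span ⟨s, hs, rfl⟩, rfl⟩⟩
  have hCconv : Convex ℝ (newtonPolyhedron I) := convex_convexHull ℝ _
  rw [hJ]
  unfold intCl
  apply le_antisymm
  · rw [Ideal.span_le]
    rintro _ ⟨b, hb, rfl⟩
    have hbq : ∃ q ∈ newtonPolyhedron I, expVec b = ((k + 1 : ℕ) : ℝ) • q := by
      rw [np_pow hI hnonempty] at hb
      obtain ⟨_, ⟨x, hx, rfl⟩, y, hy, hxy⟩ := hb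
      have hpos : (0 : ℝ) < ((k + 1 : ℕ) : ℝ) := by positivity
      refine ⟨x + ((k + 1 : ℕ) : ℝ)⁻¹ • y, ?_, ?_⟩
      · rw [← np_add_orth hI]
        exact ⟨x, hx, _, Set.mem_Ici.2 (smul_nonneg (inv_nonneg.2 hpos.le) hy), rfl⟩
      · rw [smul_add, smul_smul, mul_inv_cancel₀ hpos.ne', one_smul]
        exact hxy.symm
    obtain ⟨q, hq, hbq⟩ := hbq
    obtain ⟨a, ha, hab⟩ := key_step hI q hq (k + 1) (by omega)
    rw [← hbq, ← np_pow hI hnonempty] at hab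
    have hle : a ≤ b := by
      have h0 : (0 : Fin n → ℝ) ≤ expVec b - expVec a := by
        refine convexHull_min (t := Set.Ici 0) ?_ (convex_Ici 0) hab
        rintro _ ⟨c, _, rfl⟩
        exact expVec_nonneg c
      intro i
      have := h0 i
      simpa [expVec] using this
    obtain ⟨d, rfl⟩ := le_iff_exists_add.1 hle
    rw [expVec_add, add_sub_cancel_left] at hab
    have hmul : monomial (a + d) (1 : K) = monomial a 1 * monomial d 1 := by
      rw [monomial_mul, mul_one]
    rw [hmul]
    exact Ideal.mul_mem_mul (Ideal.subset_span ⟨a, ha, rfl⟩) (Ideal.subset_span ⟨d, hab, rfl⟩)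
  · rw [Ideal.span_mul_span', Ideal.span_le]
    rintro _ ⟨_, ⟨a, ha, rfl⟩, _, ⟨d, hd, rfl⟩, rfl⟩
    apply Ideal.subset_span
    refine ⟨a + d, ?_, by simp [monomial_mul]⟩
    rw [expVec_add, pow_succ, np_mul (isMonomial_pow hI k) hI, add_comm (expVec a)]
    exact ⟨_, hd, _, ha.1, rfl⟩
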